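/- arXiv:1106.2213 — 3 statements merged into one kernel-verified Lean document; each statement's English description precedes it below -/
import Mathlib

section
/- Let h : [0,∞) → [0,∞) be an operator monotone function with h(1) = 1 (i.e. the representing function of an operator mean) that is geometrically convex, i.e. h(√(xy)) ≤ √(h(x)h(y)) for all x,y ≥ 0. For positive definite n×n complex matrices A, B define A σ B := A^{1/2} h(A^{-1/2} B A^{-1/2}) A^{1/2}. Then for every k = 1,…,n, setting a := (∏_{j=1}^k μ_j(A))^{1/k} and b := (∏_{j=n+1-k}^n μ_j(B))^{1/k}, one has (∏_{j=1}^k μ_j(A σ B))^{1/k} ≥ a·h(b/a). -/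
open scoped ComplexOrder

section Defs

variable {n : ℕ}

/-- eigenvalues of a Hermitian matrix listed in increasing order -/
noncomputable def eigUp {A : Matrix (Fin n) (Fin n) ℂ} (hA : A.IsHermitian) : Fin n → ℝ :=
  fun i => hA.eigenvalues (Tuple.sort hA.eigenvalues i)

/-- eigenvalues of a Hermitian matrix listed in decreasing order: `eigDown hA i = μ_{i+1}(A)` -/
noncomputable def eigDown {A : Matrix (Fin n) (Fin n) ℂ} (hA : A.IsHermitian) : Fin n → ℝ :=
  fun i => eigUp hA i.rev

/-- the product of the `k` smallest eigenvalues, `∏_{j=1}^k μ_{n+1-j}(A)` -/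
noncomputable def prodSmall (A : Matrix (Fin n) (Fin n) ℂ) (k : ℕ) : ℝ :=
  if hA : A.IsHermitian then
    ∏ i ∈ Finset.univ.filter (fun i : Fin n => (i : ℕ) < k), eigUp hA i
  else 0

/-- the product of the `k` largest eigenvalues, `∏_{j=1}^k μ_j(A)` -/
noncomputable def prodLarge (A : Matrix (Fin n) (Fin n) ℂ) (k : ℕ) : ℝ :=
  if hA : A.IsHermitian then
    ∏ i ∈ Finset.univ.filter (fun i : Fin n => (i : ℕ) < k), eigDown hA i
  else 0

/-- the sum of the `k` smallest eigenvalues, `∑_{j=1}^k μ_{n+1-j}(A)` -/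
noncomputable def sumSmall (A : Matrix (Fin n) (Fin n) ℂ) (k : ℕ) : ℝ :=
  if hA : A.IsHermitian then
    ∑ i ∈ Finset.univ.filter (fun i : Fin n => (i : ℕ) < k), eigUp hA i
  else 0

/-- A doubly concave function on an interval `Ω ⊆ [0,∞)`. -/
structure DoublyConcaveOn (f : ℝ → ℝ) (Ω : Set ℝ) : Prop where
  subset_Ici : Ω ⊆ Set.Ici (0 : ℝ)
  nonneg : ∀ x ∈ Ω, 0 ≤ f x
  continuousOn : ContinuousOn f Ω
  concaveOn : ConcaveOn ℝ Ω f
  geomConcave : ∀ x ∈ Ω, ∀ y ∈ Ω, Real.sqrt (f x * f y) ≤ f (Real.sqrt (x * y))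

/-- `𝔼_p(Z) := (𝔼(Z^p))^{1/p}` -/
noncomputable def Ep {n m : ℕ} (E : Matrix (Fin n) (Fin n) ℂ →ₗ[ℂ] Matrix (Fin m) (Fin m) ℂ)
    (p : ℝ) (Z : Matrix (Fin n) (Fin n) ℂ) : Matrix (Fin m) (Fin m) ℂ :=
  cfc (fun x : ℝ => x ^ (1 / p)) (E (cfc (fun x : ℝ => x ^ p) Z))

/-- the power `p`-mean `A β_p B := ((A^p + B^p)/2)^{1/p}` -/
noncomputable def betaP (p : ℝ) (A B : Matrix (Fin n) (Fin n) ℂ) : Matrix (Fin n) (Fin n) ℂ :=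
  cfc (fun x : ℝ => x ^ (1 / p))
    ((2 : ℂ)⁻¹ • (cfc (fun x : ℝ => x ^ p) A + cfc (fun x : ℝ => x ^ p) B))

noncomputable def sqrtM (A : Matrix (Fin n) (Fin n) ℂ) : Matrix (Fin n) (Fin n) ℂ :=
  cfc Real.sqrt A

noncomputable def invSqrtM (A : Matrix (Fin n) (Fin n) ℂ) : Matrix (Fin n) (Fin n) ℂ :=
  cfc (fun x : ℝ => (Real.sqrt x)⁻¹) A

/-- operator mean with representing function `h`: `A σ B = A^{1/2} h(A^{-1/2} B A^{-1/2}) A^{1/2}` -/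
noncomputable def opMean (h : ℝ → ℝ) (A B : Matrix (Fin n) (Fin n) ℂ) :
    Matrix (Fin n) (Fin n) ℂ :=
  sqrtM A * cfc h (invSqrtM A * B * invSqrtM A) * sqrtM A

/-- the weighted geometric mean `A #_α B` -/
noncomputable def sharp (α : ℝ) (A B : Matrix (Fin n) (Fin n) ℂ) : Matrix (Fin n) (Fin n) ℂ :=
  sqrtM A * cfc (fun x : ℝ => x ^ α) (invSqrtM A * B * invSqrtM A) * sqrtM A

/-- the (real) determinant of a Hermitian matrix -/
noncomputable def rdet (A : Matrix (Fin n) (Fin n) ℂ) : ℝ := (A.det).re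

open Classical in
/-- the derived anti-norm `‖A‖_! = ‖A^{-p}‖^{-1/p}` for invertible positive `A`, `0` otherwise. -/
noncomputable def derivedAntiNorm (N : Matrix (Fin n) (Fin n) ℂ → ℝ) (p : ℝ)
    (A : Matrix (Fin n) (Fin n) ℂ) : ℝ :=
  if IsUnit A.det then (N (cfc (fun x : ℝ => x ^ (-p)) A)) ^ (-(1 / p)) else 0

end Defs

open Matrix

/-- Simultaneous form of the spectral theorem and of the functional calculus. -/
theorem Matrix.IsHermitian.exists_unitary_cfc_eq {n : ℕ} {A : Matrix (Fin n) (Fin n) ℂ}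
    (hA : A.IsHermitian) :
    ∃ U : Matrix (Fin n) (Fin n) ℂ, Uᴴ * U = 1 ∧ U * Uᴴ = 1 ∧
      A = U * diagonal (fun i => (hA.eigenvalues i : ℂ)) * Uᴴ ∧
      ∀ f : ℝ → ℝ,
        cfc f A = U * diagonal (fun i => ((f (hA.eigenvalues i) : ℝ) : ℂ)) * Uᴴ := by
  refine ⟨hA.eigenvectorUnitary, Unitary.coe_star_mul_self _, Unitary.coe_mul_star_self _,
    ?_, ?_⟩
  · have h := hA.spectral_theorem
    rw [Unitary.conjStarAlgAut_apply] at h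
    exact h
  intro f
  rw [hA.cfc_eq, Matrix.IsHermitian.cfc, Unitary.conjStarAlgAut_apply]
  rfl

theorem Matrix.PosSemidef.one_le_re_det_one_add {n : ℕ} {K : Matrix (Fin n) (Fin n) ℂ}
    (hK : K.PosSemidef) : 1 ≤ (1 + K).det.re := by
  obtain ⟨U, -, hU', hK', -⟩ := hK.1.exists_unitary_cfc_eq
  have h1 : (1 + K) = U * diagonal (fun i => ((1 + hK.1.eigenvalues i : ℝ) : ℂ)) * Uᴴ := by
    have : diagonal (fun i => ((1 + hK.1.eigenvalues i : ℝ) : ℂ))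
        = 1 + diagonal (fun i => ((hK.1.eigenvalues i : ℝ) : ℂ)) := by
      rw [← diagonal_one, diagonal_add]; simp
    rw [this, mul_add, add_mul, mul_one, hU']
    exact congrArg (1 + ·) hK'
  rw [h1, det_mul_right_comm, hU', one_mul, det_diagonal, ← Complex.ofReal_prod, Complex.ofReal_re]
  have h2 := Finset.prod_le_prod (s := Finset.univ) (f := fun _ : Fin n => (1 : ℝ))
    (g := fun i => 1 + hK.1.eigenvalues i) (fun _ _ => zero_le_one)
    fun i _ => by linarith [hK.eigenvalues_nonneg i]
  simpa using h2

open scoped MatrixOrder Matrix.Norms.L2Operator in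
theorem Matrix.PosDef.re_det_le_re_det_add {n : ℕ} {X W : Matrix (Fin n) (Fin n) ℂ}
    (hX : X.PosDef) (hW : W.PosSemidef) : X.det.re ≤ (X + W).det.re := by
  obtain ⟨S, hS, hXS⟩ : ∃ S : Matrix (Fin n) (Fin n) ℂ, IsUnit S.det ∧ X = Sᴴ * S := by
    obtain ⟨S, hS⟩ := CStarAlgebra.nonneg_iff_eq_star_mul_self.mp hX.posSemidef.nonneg
    refine ⟨S, ?_, hS⟩
    have h := (Matrix.isUnit_iff_isUnit_det _).1 hX.isUnit
    rw [hS, det_mul] at h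
    exact isUnit_of_mul_isUnit_right h
  have hfac : X + W = Sᴴ * (1 + (S⁻¹)ᴴ * W * S⁻¹) * S := by
    have h1 : Sᴴ * (S⁻¹)ᴴ = 1 := by
      rw [← conjTranspose_mul, nonsing_inv_mul _ hS, conjTranspose_one]
    rw [mul_add, add_mul, mul_one, ← hXS]
    simp only [← Matrix.mul_assoc]
    rw [h1, one_mul, Matrix.mul_assoc W, nonsing_inv_mul _ hS, mul_one]
  have hdet : X.det = ((X.det.re : ℝ) : ℂ) := by
    have := hX.det_pos.le
    exact (Complex.ext rfl (by simpa using (Complex.le_def.1 this).2.symm))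
  have hpos : 0 ≤ X.det.re := (Complex.le_def.1 hX.det_pos.le).1
  have h2 : (X + W).det = ((X.det.re : ℝ) : ℂ) * (1 + (S⁻¹)ᴴ * W * S⁻¹).det := by
    rw [← hdet, hfac, det_mul, det_mul, hXS, det_mul]; ring
  rw [h2, Complex.re_ofReal_mul]
  exact le_mul_of_one_le_right hpos
    (hW.conjTranspose_mul_mul_same S⁻¹).one_le_re_det_one_add

theorem Matrix.posDef_compression_diagonal {n k : ℕ} {W : Matrix (Fin n) (Fin k) ℂ}
    (hW : Wᴴ * W = 1) {g : Fin n → ℝ} (hg : ∀ j, 0 < g j) :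
    (Wᴴ * diagonal (fun j => (g j : ℂ)) * W).PosDef := by
  refine PosDef.conjTranspose_mul_mul_same (PosDef.diagonal fun j => by simpa using hg j) ?_
  intro x y hxy
  simpa [Matrix.mulVec_mulVec, hW] using congrArg (fun z => Wᴴ *ᵥ z) hxy

/-- A compression of a positive diagonal matrix to a `k`-dimensional subspace has determinant at
most the product of its `k` largest entries. -/
theorem Matrix.re_det_compression_diagonal_le {n k : ℕ} {W : Matrix (Fin n) (Fin k) ℂ}
    (hW : Wᴴ * W = 1) {g : Fin n → ℝ} (hg : ∀ j, 0 < g j) {f : Fin k → Fin n}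
    (hf : Function.Injective f) {τ : ℝ} (hτ : 0 < τ) (hle : ∀ i, τ ≤ g (f i))
    (hge : ∀ j, j ∉ Set.range f → g j ≤ τ) :
    (Wᴴ * diagonal (fun j => (g j : ℂ)) * W).det.re ≤ ∏ i, g (f i) := by
  classical
  set r : Fin n → ℝ := fun j => if j ∈ Set.range f then g j / τ - 1 else 0 with hr
  have hr0 : ∀ j, 0 ≤ r j := by
    intro j
    simp only [hr]
    split_ifs with h
    · obtain ⟨i, rfl⟩ := h
      have := (one_le_div hτ).2 (hle i)
      linarith
    · exact le_rfl
  have hgr : ∀ j, g j ≤ τ * (1 + r j) := by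
    intro j
    simp only [hr]
    split_ifs with h
    · field_simp; linarith
    · linarith [hge j h]
  set R : Matrix (Fin n) (Fin n) ℂ := diagonal fun j => ((√(r j) : ℝ) : ℂ) with hR
  have hRH : Rᴴ = R := by
    rw [hR, diagonal_conjTranspose]; congr 1; ext j; simp
  have hRR : R * R = diagonal fun j => (r j : ℂ) := by
    rw [hR, diagonal_mul_diagonal]; congr 1; ext j
    rw [← Complex.ofReal_mul, Real.mul_self_sqrt (hr0 j)]
  have hstep1 : (Wᴴ * diagonal (fun j => (g j : ℂ)) * W).det.re ≤
      (Wᴴ * diagonal (fun j => ((τ * (1 + r j) : ℝ) : ℂ)) * W).det.re := by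
    have hdiff : (diagonal fun j => ((τ * (1 + r j) - g j : ℝ) : ℂ)).PosSemidef :=
      PosSemidef.diagonal fun j => by
        simpa only [Pi.zero_apply, Complex.zero_le_real, sub_nonneg] using hgr j
    have h := (posDef_compression_diagonal hW hg).re_det_le_re_det_add
      (hdiff.conjTranspose_mul_mul_same W)
    rw [← Matrix.add_mul, ← Matrix.mul_add, diagonal_add] at h
    have h5 : (fun j => ((τ * (1 + r j) : ℝ) : ℂ)) =
        fun j => (g j : ℂ) + ((τ * (1 + r j) - g j : ℝ) : ℂ) := by
      ext j; push_cast; ring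
    rw [h5]
    exact h
  have hstep2 : Wᴴ * diagonal (fun j => ((τ * (1 + r j) : ℝ) : ℂ)) * W =
      (τ : ℂ) • (1 + (Wᴴ * R) * (R * W)) := by
    have h3 : diagonal (fun j => ((τ * (1 + r j) : ℝ) : ℂ)) = (τ : ℂ) • (1 + R * R) := by
      rw [hRR, ← diagonal_one, diagonal_add, ← diagonal_smul]
      congr 1; ext j; simp
    rw [h3, Matrix.mul_smul, Matrix.smul_mul, Matrix.mul_add, Matrix.add_mul, Matrix.mul_one, hW]
    simp only [Matrix.mul_assoc]
  have hstep3 : (1 + (Wᴴ * R) * (R * W)).det.re ≤ ∏ j, (1 + r j) := by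
    rw [det_one_add_mul_comm]
    have hproj : (1 - W * Wᴴ).PosSemidef := by
      have h : 1 - W * Wᴴ = (1 - W * Wᴴ)ᴴ * (1 - W * Wᴴ) := by
        have h' : W * Wᴴ * (W * Wᴴ) = W * Wᴴ := by
          rw [Matrix.mul_assoc, ← Matrix.mul_assoc Wᴴ, hW, Matrix.one_mul]
        rw [conjTranspose_sub, conjTranspose_one, conjTranspose_mul, conjTranspose_conjTranspose,
          sub_mul, mul_sub, mul_sub, h']
        simp
      rw [h]
      exact posSemidef_conjTranspose_mul_self _
    have hpd : (1 + (R * W) * (Wᴴ * R)).PosDef := by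
      have h : (R * W) * (Wᴴ * R) = (R * W) * (R * W)ᴴ := by
        rw [conjTranspose_mul, hRH]
      rw [h]
      exact PosDef.one.add_posSemidef (posSemidef_self_mul_conjTranspose _)
    have h := hpd.re_det_le_re_det_add (hproj.conjTranspose_mul_mul_same R)
    have hsum : 1 + (R * W) * (Wᴴ * R) + Rᴴ * (1 - W * Wᴴ) * R =
        diagonal fun j => ((1 + r j : ℝ) : ℂ) := by
      have h3 : diagonal (fun j => ((1 + r j : ℝ) : ℂ)) = 1 + R * R := by
        rw [hRR, ← diagonal_one, diagonal_add]
        congr 1; ext j; simp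
      rw [h3, hRH, Matrix.mul_sub, Matrix.sub_mul, Matrix.mul_one]
      simp only [Matrix.mul_assoc]
      abel
    rw [hsum, det_diagonal, ← Complex.ofReal_prod, Complex.ofReal_re] at h
    exact h
  have hprod : τ ^ k * ∏ j, (1 + r j) = ∏ i, g (f i) := by
    have h4 : ∏ j, (1 + r j) = ∏ i, (g (f i) / τ) := by
      have h5 : ∏ i, (g (f i) / τ) = ∏ i, (1 + r (f i)) :=
        Finset.prod_congr rfl fun i _ => by simp [hr]
      rw [h5, ← Finset.prod_image (s := Finset.univ) (g := f) (f := fun j => 1 + r j)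
        hf.injOn]
      refine (Finset.prod_subset (Finset.subset_univ _) fun j _ hj => ?_).symm
      have : j ∉ Set.range f := by simpa using hj
      simp only [hr, if_neg this, add_zero]
    rw [h4, Finset.prod_div_distrib]
    simp only [Finset.prod_const, Finset.card_univ, Fintype.card_fin]
    field_simp
  refine hstep1.trans ?_
  rw [hstep2, det_smul, Fintype.card_fin, ← Complex.ofReal_pow, Complex.re_ofReal_mul, ← hprod]
  exact mul_le_mul_of_nonneg_left hstep3 (by positivity)

/-- Jensen's inequality for the logarithm of the determinant of a compression. -/
theorem Matrix.sum_log_le_log_re_det_compression {n k : ℕ} {W : Matrix (Fin n) (Fin k) ℂ}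
    (hW : Wᴴ * W = 1) {g : Fin n → ℝ} (hg : ∀ j, 0 < g j) :
    ∑ j, (∑ i, ‖W j i‖ ^ 2) * Real.log (g j) ≤
      Real.log (Wᴴ * diagonal (fun j => (g j : ℂ)) * W).det.re := by
  set M := Wᴴ * diagonal (fun j => (g j : ℂ)) * W with hM
  have hMpd : M.PosDef := posDef_compression_diagonal hW hg
  obtain ⟨Q, hQ, hQ', hMQ, -⟩ := hMpd.1.exists_unitary_cfc_eq
  set e := hMpd.1.eigenvalues
  set Y := W * Q with hY
  have hYY : Yᴴ * Y = 1 := by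
    rw [hY, conjTranspose_mul, Matrix.mul_assoc, ← Matrix.mul_assoc Wᴴ, hW, Matrix.one_mul, hQ]
  have hsq : ∀ z : ℂ, star z * z = ((‖z‖ ^ 2 : ℝ) : ℂ) := fun z => by
    rw [Complex.star_def, Complex.conj_mul']; push_cast; rfl
  have hcol : ∀ i, ∑ j, ‖Y j i‖ ^ 2 = 1 := by
    intro i
    have h := congrFun (congrFun hYY i) i
    simp only [mul_apply, conjTranspose_apply, one_apply_eq, hsq] at h
    exact_mod_cast h
  have hrow : ∀ j, ∑ i, ‖W j i‖ ^ 2 = ∑ i, ‖Y j i‖ ^ 2 := by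
    intro j
    have h : W * Wᴴ = Y * Yᴴ := by
      rw [hY, conjTranspose_mul, Matrix.mul_assoc, ← Matrix.mul_assoc Q, hQ', Matrix.one_mul]
    have h := congrFun (congrFun h j) j
    simp only [mul_apply, conjTranspose_apply, mul_comm _ (star _), hsq] at h
    exact_mod_cast h
  have hdiag : ∀ i, e i = ∑ j, ‖Y j i‖ ^ 2 * g j := by
    intro i
    have h : Yᴴ * diagonal (fun j => (g j : ℂ)) * Y = diagonal fun i => (e i : ℂ) := by
      have h' : Yᴴ * diagonal (fun j => (g j : ℂ)) * Y = Qᴴ * M * Q := by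
        rw [hY, hM, conjTranspose_mul]; simp only [Matrix.mul_assoc]
      rw [h', hMQ]
      simp only [Matrix.mul_assoc, hQ, Matrix.mul_one]
      rw [← Matrix.mul_assoc, hQ, Matrix.one_mul]
    have h := congrFun (congrFun h i) i
    rw [mul_apply, diagonal_apply_eq] at h
    have h2 : ∀ j, (Yᴴ * diagonal (fun j => (g j : ℂ))) i j * Y j i =
        ((‖Y j i‖ ^ 2 * g j : ℝ) : ℂ) := fun j => by
      rw [mul_diagonal, conjTranspose_apply, mul_right_comm, hsq, Complex.ofReal_mul]
    simp only [h2] at h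
    exact_mod_cast h.symm
  have hjensen : ∀ i, ∑ j, ‖Y j i‖ ^ 2 * Real.log (g j) ≤ Real.log (e i) := by
    intro i
    rw [hdiag]
    exact strictConcaveOn_log_Ioi.concaveOn.le_map_sum (t := Finset.univ)
      (w := fun j => ‖Y j i‖ ^ 2) (p := g) (fun j _ => by positivity) (hcol i) fun j _ => hg j
  have hdet : M.det.re = ∏ i, e i := by
    have := hMpd.1.det_eq_prod_eigenvalues
    rw [this]
    exact_mod_cast Complex.ofReal_re (∏ i, e i)
  rw [hdet, Real.log_prod fun i _ => (hMpd.eigenvalues_pos i).ne']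
  calc ∑ j, (∑ i, ‖W j i‖ ^ 2) * Real.log (g j)
      = ∑ i, ∑ j, ‖Y j i‖ ^ 2 * Real.log (g j) := by
        rw [Finset.sum_comm]; simp only [hrow, Finset.sum_mul]
    _ ≤ ∑ i, Real.log (e i) := Finset.sum_le_sum fun i _ => hjensen i

theorem prodLarge_eq_prod_eigenvalues {n : ℕ} {A : Matrix (Fin n) (Fin n) ℂ}
    (hA : A.IsHermitian) {k : ℕ} (hk : 1 ≤ k) (hkn : k ≤ n) :
    ∃ f : Fin k → Fin n, Function.Injective f ∧ prodLarge A k = ∏ i, hA.eigenvalues (f i) ∧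
      ∃ i₀, (∀ i, hA.eigenvalues (f i₀) ≤ hA.eigenvalues (f i)) ∧
        ∀ j, j ∉ Set.range f → hA.eigenvalues j ≤ hA.eigenvalues (f i₀) := by
  set s := Tuple.sort hA.eigenvalues
  have hmono : Monotone (hA.eigenvalues ∘ s) := Tuple.monotone_sort _
  refine ⟨fun i => s (Fin.castLE hkn i).rev, ?_, ?_, ⟨k - 1, by omega⟩, ?_, ?_⟩
  · intro i j hij
    simpa using hij
  · rw [prodLarge, dif_pos hA]
    refine (Finset.prod_nbij (fun i : Fin k => Fin.castLE hkn i) ?_ ?_ ?_ ?_).symm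
    · intro i _; simp
    · intro i _ j _ hij; simpa using hij
    · intro j hj
      exact ⟨⟨j, by simpa using hj⟩, by simp, rfl⟩
    · intro i _; rfl
  · intro i
    refine hmono (Fin.rev_le_rev.2 ?_)
    rw [Fin.le_def]
    simp only [Fin.val_castLE]
    omega
  · intro j hj
    have h1 : j = s (s.symm j) := (s.apply_symm_apply j).symm
    rw [h1]
    refine hmono ?_
    rw [Fin.le_rev_iff, Fin.le_def]
    simp only [Fin.val_castLE]
    by_contra hlt
    exact hj ⟨⟨(s.symm j).rev, by omega⟩, by
      change s (s.symm j).rev.rev = j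
      rw [Fin.rev_rev, s.apply_symm_apply]⟩

theorem prodSmall_eq_prod_eigenvalues {n : ℕ} {A : Matrix (Fin n) (Fin n) ℂ}
    (hA : A.IsHermitian) {k : ℕ} (hk : 1 ≤ k) (hkn : k ≤ n) :
    ∃ f : Fin k → Fin n, Function.Injective f ∧ prodSmall A k = ∏ i, hA.eigenvalues (f i) ∧
      ∃ i₀, (∀ i, hA.eigenvalues (f i) ≤ hA.eigenvalues (f i₀)) ∧
        ∀ j, j ∉ Set.range f → hA.eigenvalues (f i₀) ≤ hA.eigenvalues j := by
  set s := Tuple.sort hA.eigenvalues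
  have hmono : Monotone (hA.eigenvalues ∘ s) := Tuple.monotone_sort _
  refine ⟨fun i => s (Fin.castLE hkn i), ?_, ?_, ⟨k - 1, by omega⟩, ?_, ?_⟩
  · intro i j hij
    simpa using hij
  · rw [prodSmall, dif_pos hA]
    refine (Finset.prod_nbij (fun i : Fin k => Fin.castLE hkn i) ?_ ?_ ?_ ?_).symm
    · intro i _; simp
    · intro i _ j _ hij; simpa using hij
    · intro j hj
      exact ⟨⟨j, by simpa using hj⟩, by simp, rfl⟩
    · intro i _; rfl
  · intro i
    refine hmono ?_
    rw [Fin.le_def]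
    simp only [Fin.val_castLE]
    omega
  · intro j hj
    have h1 : j = s (s.symm j) := (s.apply_symm_apply j).symm
    rw [h1]
    refine hmono ?_
    rw [Fin.le_def]
    simp only [Fin.val_castLE]
    by_contra hlt
    exact hj ⟨⟨s.symm j, by omega⟩, by simp⟩

theorem prodLarge_pos {n : ℕ} {A : Matrix (Fin n) (Fin n) ℂ} (hA : A.PosDef) (k : ℕ) :
    0 < prodLarge A k := by
  rw [prodLarge, dif_pos hA.1]
  exact Finset.prod_pos fun i _ => hA.eigenvalues_pos _

theorem prodSmall_pos {n : ℕ} {A : Matrix (Fin n) (Fin n) ℂ} (hA : A.PosDef) (k : ℕ) :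
    0 < prodSmall A k := by
  rw [prodSmall, dif_pos hA.1]
  exact Finset.prod_pos fun i _ => hA.eigenvalues_pos _

theorem Matrix.unitary_conjTranspose_mul_isometry {n k : ℕ} {U : Matrix (Fin n) (Fin n) ℂ}
    (hU : U * Uᴴ = 1) {V : Matrix (Fin n) (Fin k) ℂ} (hV : Vᴴ * V = 1) :
    (Uᴴ * V)ᴴ * (Uᴴ * V) = 1 := by
  rw [conjTranspose_mul, conjTranspose_conjTranspose, Matrix.mul_assoc, ← Matrix.mul_assoc U, hU,
    Matrix.one_mul, hV]

theorem Matrix.compression_conj_eq {n k : ℕ} (U D : Matrix (Fin n) (Fin n) ℂ)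
    (V : Matrix (Fin n) (Fin k) ℂ) :
    Vᴴ * (U * D * Uᴴ) * V = (Uᴴ * V)ᴴ * D * (Uᴴ * V) := by
  rw [conjTranspose_mul, conjTranspose_conjTranspose]
  simp only [Matrix.mul_assoc]

theorem Matrix.conj_diagonal_inv {n : ℕ} {U : Matrix (Fin n) (Fin n) ℂ} (hU : Uᴴ * U = 1)
    (hU' : U * Uᴴ = 1) {g : Fin n → ℝ} (hg : ∀ j, 0 < g j) :
    (U * diagonal (fun j => (g j : ℂ)) * Uᴴ)⁻¹ =
      U * diagonal (fun j => (((g j)⁻¹ : ℝ) : ℂ)) * Uᴴ := by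
  refine inv_eq_right_inv ?_
  have h : diagonal (fun j => (g j : ℂ)) * diagonal (fun j => (((g j)⁻¹ : ℝ) : ℂ)) = 1 := by
    rw [diagonal_mul_diagonal, ← diagonal_one]
    congr 1; ext j
    rw [← Complex.ofReal_mul, mul_inv_cancel₀ (hg j).ne', Complex.ofReal_one]
  calc _ = U * (diagonal (fun j => (g j : ℂ)) * ((Uᴴ * U) *
        diagonal (fun j => (((g j)⁻¹ : ℝ) : ℂ)))) * Uᴴ := by simp only [Matrix.mul_assoc]
    _ = 1 := by rw [hU, Matrix.one_mul, h, Matrix.mul_one, hU']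

theorem Matrix.PosDef.re_det_compression_le_prodLarge {n k : ℕ} {Z : Matrix (Fin n) (Fin n) ℂ}
    (hZ : Z.PosDef) (hk : 1 ≤ k) (hkn : k ≤ n) {V : Matrix (Fin n) (Fin k) ℂ}
    (hV : Vᴴ * V = 1) : (Vᴴ * Z * V).det.re ≤ prodLarge Z k := by
  obtain ⟨U, -, hU', hZU, -⟩ := hZ.1.exists_unitary_cfc_eq
  obtain ⟨f, hf, hprod, i₀, hle, hge⟩ := prodLarge_eq_prod_eigenvalues hZ.1 hk hkn
  rw [hprod]
  conv_lhs => rw [hZU]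
  rw [compression_conj_eq]
  exact re_det_compression_diagonal_le (unitary_conjTranspose_mul_isometry hU' hV)
    hZ.eigenvalues_pos hf (hZ.eigenvalues_pos _) hle hge

theorem Matrix.PosDef.re_det_compression_inv_le {n k : ℕ} {B : Matrix (Fin n) (Fin n) ℂ}
    (hB : B.PosDef) (hk : 1 ≤ k) (hkn : k ≤ n) {V : Matrix (Fin n) (Fin k) ℂ}
    (hV : Vᴴ * V = 1) : (Vᴴ * B⁻¹ * V).det.re ≤ (prodSmall B k)⁻¹ := by
  obtain ⟨U, hU, hU', hBU, -⟩ := hB.1.exists_unitary_cfc_eq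
  obtain ⟨f, hf, hprod, i₀, hle, hge⟩ := prodSmall_eq_prod_eigenvalues hB.1 hk hkn
  have hpos := hB.eigenvalues_pos
  rw [hprod, ← Finset.prod_inv_distrib]
  conv_lhs => rw [hBU]
  rw [conj_diagonal_inv hU hU' hpos, compression_conj_eq]
  exact re_det_compression_diagonal_le (g := fun j => (hB.1.eigenvalues j)⁻¹)
    (unitary_conjTranspose_mul_isometry hU' hV) (fun j => inv_pos.2 (hpos j)) hf
    (inv_pos.2 (hpos (f i₀))) (fun i => inv_anti₀ (hpos _) (hle i))
    fun j hj => inv_anti₀ (hpos _) (hge j hj)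

/-- A continuous midpoint convex function on the real line is convex. -/
theorem convexOn_univ_of_midpoint_le {F : ℝ → ℝ} (hF : Continuous F)
    (hmid : ∀ x y, F ((x + y) / 2) ≤ (F x + F y) / 2) : ConvexOn ℝ Set.univ F := by
  refine ⟨convex_univ, fun x _ y _ a b ha hb hab => ?_⟩
  set G : ℝ → ℝ := fun t => F ((1 - t) * x + t * y) - ((1 - t) * F x + t * F y) with hG
  have hGc : Continuous G := by fun_prop
  have hGmid : ∀ s t, G ((s + t) / 2) ≤ (G s + G t) / 2 := by
    intro s t
    have h := hmid ((1 - s) * x + s * y) ((1 - t) * x + t * y)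
    have harg : ((1 - s) * x + s * y + ((1 - t) * x + t * y)) / 2 =
        (1 - (s + t) / 2) * x + (s + t) / 2 * y := by ring
    rw [harg] at h
    simp only [hG]
    linarith
  have hG0 : G 0 = 0 := by simp [hG]
  have hG1 : G 1 = 0 := by simp [hG]
  suffices hle : ∀ t ∈ Set.Icc (0 : ℝ) 1, G t ≤ 0 by
    have h := hle b ⟨hb, by linarith⟩
    have ha' : a = 1 - b := by linarith
    simp only [hG] at h
    simp only [smul_eq_mul, ha']
    linarith
  by_contra! hcon
  obtain ⟨t₁, ht₁, hpos⟩ := hcon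
  obtain ⟨m, hm, hmax⟩ :=
    isCompact_Icc.exists_isMaxOn ⟨t₁, ht₁⟩ (hGc.continuousOn (s := Set.Icc (0 : ℝ) 1))
  have hmpos : 0 < G m := hpos.trans_le (hmax ht₁)
  have hK : IsCompact (Set.Icc (0 : ℝ) 1 ∩ G ⁻¹' {G m}) :=
    isCompact_Icc.inter_right (isClosed_singleton.preimage hGc)
  obtain ⟨c, ⟨hc, hcm⟩, hleast⟩ := hK.exists_isLeast ⟨m, hm, rfl⟩
  have hcm : G c = G m := hcm
  have hc0 : 0 < c := by
    refine lt_of_le_of_ne hc.1 fun h => ?_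
    rw [← h, hG0] at hcm
    linarith
  have hc1 : c < 1 := by
    refine lt_of_le_of_ne hc.2 fun h => ?_
    rw [h, hG1] at hcm
    linarith
  set δ := min c (1 - c) with hδ
  have hδ0 : 0 < δ := lt_min hc0 (by linarith)
  have hδc : δ ≤ c := min_le_left _ _
  have hδc' : δ ≤ 1 - c := min_le_right _ _
  have hl : c - δ ∈ Set.Icc (0 : ℝ) 1 := ⟨by linarith, by linarith⟩
  have hr : c + δ ∈ Set.Icc (0 : ℝ) 1 := ⟨by linarith, by linarith⟩
  have h1 : G (c - δ) < G m := by
    refine lt_of_le_of_ne (hmax hl) fun h => ?_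
    have := hleast ⟨hl, h⟩
    linarith
  have h2 : G (c + δ) ≤ G m := hmax hr
  have h3 := hGmid (c - δ) (c + δ)
  have h4 : (c - δ + (c + δ)) / 2 = c := by ring
  rw [h4, hcm] at h3
  linarith

section GeometricallyConvex

variable {h : ℝ → ℝ}

theorem pos_of_geometrically_convex (hnn : ∀ x : ℝ, 0 ≤ x → 0 ≤ h x) (h1 : h 1 = 1)
    (hgconvex : ∀ x y : ℝ, 0 ≤ x → 0 ≤ y → h (Real.sqrt (x * y)) ≤ Real.sqrt (h x * h y))
    {x : ℝ} (hx : 0 < x) : 0 < h x := by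
  refine lt_of_le_of_ne (hnn x hx.le) fun h0 => ?_
  have h2 := hgconvex x x⁻¹ hx.le (inv_pos.2 hx).le
  rw [mul_inv_cancel₀ hx.ne', Real.sqrt_one, h1, ← h0, zero_mul, Real.sqrt_zero] at h2
  linarith

theorem convexOn_log_comp_exp (hnn : ∀ x : ℝ, 0 ≤ x → 0 ≤ h x)
    (hcont : ContinuousOn h (Set.Ici 0)) (h1 : h 1 = 1)
    (hgconvex : ∀ x y : ℝ, 0 ≤ x → 0 ≤ y → h (Real.sqrt (x * y)) ≤ Real.sqrt (h x * h y)) :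
    ConvexOn ℝ Set.univ fun u => Real.log (h (Real.exp u)) := by
  have hpos : ∀ u, 0 < h (Real.exp u) := fun u =>
    pos_of_geometrically_convex hnn h1 hgconvex (Real.exp_pos u)
  refine convexOn_univ_of_midpoint_le ?_ fun x y => ?_
  · exact (hcont.comp_continuous Real.continuous_exp fun u => (Real.exp_pos u).le).log
      fun u => (hpos u).ne'
  · have h2 := hgconvex _ _ (Real.exp_pos x).le (Real.exp_pos y).le
    rw [← Real.exp_add, Real.sqrt_eq_rpow, ← Real.exp_mul] at h2
    have h3 := Real.log_le_log (by rw [mul_one_div]; exact hpos _) h2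
    rw [Real.log_sqrt (mul_nonneg (hpos x).le (hpos y).le),
      Real.log_mul (hpos x).ne' (hpos y).ne', mul_one_div] at h3
    exact h3

end GeometricallyConvex

theorem monotone_of_operator_monotone {h : ℝ → ℝ}
    (hopmono : ∀ (m : ℕ) (X Y : Matrix (Fin m) (Fin m) ℂ), X.PosSemidef →
      (Y - X).PosSemidef → (cfc h Y - cfc h X).PosSemidef) {x y : ℝ} (hx : 0 ≤ x) (hxy : x ≤ y) :
    h x ≤ h y := by
  have hcfc : ∀ z : ℝ, cfc h (algebraMap ℝ (Matrix (Fin 1) (Fin 1) ℂ) z) =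
      algebraMap ℝ (Matrix (Fin 1) (Fin 1) ℂ) (h z) := fun z => cfc_algebraMap z h
  have hps : ∀ z : ℝ, (algebraMap ℝ (Matrix (Fin 1) (Fin 1) ℂ) z).PosSemidef ↔ 0 ≤ z := by
    intro z
    rw [algebraMap_eq_diagonal, posSemidef_diagonal_iff]
    simp
  have h2 := hopmono 1 (algebraMap ℝ _ x) (algebraMap ℝ _ y) ((hps x).2 hx)
    (by rw [← map_sub]; exact (hps _).2 (sub_nonneg.2 hxy))
  rw [hcfc, hcfc, ← map_sub, hps] at h2
  linarith

theorem Matrix.conj_diagonal_mul_submatrix {n k : ℕ} {U : Matrix (Fin n) (Fin n) ℂ}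
    (hU : Uᴴ * U = 1) (f : Fin k → Fin n) (g : Fin n → ℂ) :
    U * diagonal g * Uᴴ * U.submatrix id f = U.submatrix id f * diagonal (g ∘ f) := by
  have h : U * diagonal g * Uᴴ * U = U * diagonal g := by
    rw [Matrix.mul_assoc _ Uᴴ, hU, Matrix.mul_one]
  ext i j
  have hij := congrFun (congrFun h i) (f j)
  rw [mul_diagonal] at hij ⊢
  exact hij

theorem Matrix.submatrix_col_isometry {n k : ℕ} {U : Matrix (Fin n) (Fin n) ℂ}
    (hU : Uᴴ * U = 1) {f : Fin k → Fin n} (hf : Function.Injective f) :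
    (U.submatrix id f)ᴴ * U.submatrix id f = 1 := by
  ext i j
  have h := congrFun (congrFun hU (f i)) (f j)
  rw [mul_apply] at h ⊢
  simpa [one_apply, hf.eq_iff] using h

/-- Congruence by a Hermitian matrix that acts diagonally on the columns of `V` multiplies the
determinant of the compression to `V` by the squared product of the diagonal entries. -/
theorem Matrix.re_det_compression_congr {n k : ℕ} {S Z : Matrix (Fin n) (Fin n) ℂ}
    {V : Matrix (Fin n) (Fin k) ℂ} {d : Fin k → ℝ} (hS : Sᴴ = S)
    (hSV : S * V = V * diagonal (fun i => (d i : ℂ))) :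
    (Vᴴ * (S * Z * S) * V).det.re = (∏ i, d i ^ 2) * (Vᴴ * Z * V).det.re := by
  have hVS : Vᴴ * S = diagonal (fun i => (d i : ℂ)) * Vᴴ := by
    have h := congrArg conjTranspose hSV
    rw [conjTranspose_mul, conjTranspose_mul, hS, diagonal_conjTranspose] at h
    rw [h]
    congr 2
    ext i
    simp
  have h : Vᴴ * (S * Z * S) * V =
      diagonal (fun i => (d i : ℂ)) * (Vᴴ * Z * V) * diagonal (fun i => (d i : ℂ)) := by
    calc _ = (Vᴴ * S) * Z * (S * V) := by simp only [Matrix.mul_assoc]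
      _ = _ := by rw [hVS, hSV]; simp only [Matrix.mul_assoc]
  rw [h, det_mul, det_mul, det_diagonal, mul_right_comm, ← Finset.prod_mul_distrib]
  have h2 : ∏ i, (d i : ℂ) * (d i : ℂ) = ((∏ i, d i ^ 2 : ℝ) : ℂ) := by
    push_cast
    exact Finset.prod_congr rfl fun i _ => (sq _).symm
  rw [h2, Complex.re_ofReal_mul]

theorem Matrix.conj_diagonal_isHermitian {n : ℕ} (U : Matrix (Fin n) (Fin n) ℂ) (g : Fin n → ℝ) :
    (U * diagonal (fun j => (g j : ℂ)) * Uᴴ)ᴴ = U * diagonal (fun j => (g j : ℂ)) * Uᴴ := by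
  refine isHermitian_mul_mul_conjTranspose U ?_
  rw [IsHermitian, diagonal_conjTranspose]
  congr 1
  ext j
  simp

theorem Matrix.conj_posDef {n : ℕ} {S Z : Matrix (Fin n) (Fin n) ℂ} (hS : Sᴴ = S)
    (hSu : IsUnit S) (hZ : Z.PosDef) : (S * Z * S).PosDef := by
  have h := (IsUnit.posDef_star_left_conjugate_iff hSu).2 hZ
  rwa [star_eq_conjTranspose, hS] at h

theorem Matrix.conj_diagonal_posDef {n : ℕ} {U : Matrix (Fin n) (Fin n) ℂ}
    (hU : U * Uᴴ = 1) {g : Fin n → ℝ} (hg : ∀ j, 0 < g j) :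
    (U * diagonal (fun j => (g j : ℂ)) * Uᴴ).PosDef :=
  (IsUnit.posDef_star_right_conjugate_iff (IsUnit.of_mul_eq_one _ hU)).2
    (PosDef.diagonal fun j => by simpa using hg j)

theorem stmt_6 {n : ℕ} (h : ℝ → ℝ) (hnn : ∀ x : ℝ, 0 ≤ x → 0 ≤ h x)
    (hcont : ContinuousOn h (Set.Ici 0)) (h1 : h 1 = 1)
    (hopmono : ∀ (m : ℕ) (X Y : Matrix (Fin m) (Fin m) ℂ), X.PosSemidef →
      (Y - X).PosSemidef → (cfc h Y - cfc h X).PosSemidef)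
    (hgconvex : ∀ x y : ℝ, 0 ≤ x → 0 ≤ y → h (Real.sqrt (x * y)) ≤ Real.sqrt (h x * h y))
    (A B : Matrix (Fin n) (Fin n) ℂ) (hA : A.PosDef) (hB : B.PosDef)
    (k : ℕ) (hk1 : 1 ≤ k) (hkn : k ≤ n) :
    (prodLarge A k ^ ((k : ℝ)⁻¹)) *
        h ((prodSmall B k ^ ((k : ℝ)⁻¹)) / (prodLarge A k ^ ((k : ℝ)⁻¹)))
      ≤ prodLarge (opMean h A B) k ^ ((k : ℝ)⁻¹) := by
  obtain ⟨U, hU, hU', -, hcfcA⟩ := hA.1.exists_unitary_cfc_eq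
  obtain ⟨f, hf, hprodA, -⟩ := prodLarge_eq_prod_eigenvalues hA.1 hk1 hkn
  have hApos := hA.eigenvalues_pos
  have hPA : 0 < prodLarge A k := prodLarge_pos hA k
  have hPB : 0 < prodSmall B k := prodSmall_pos hB k
  -- the square root of `A`, its inverse, and their action on the leading eigenvectors of `A`
  have hSU : sqrtM A = U * diagonal (fun i => ((√(hA.1.eigenvalues i) : ℝ) : ℂ)) * Uᴴ :=
    hcfcA _
  have hTU : invSqrtM A =
      U * diagonal (fun i => (((√(hA.1.eigenvalues i))⁻¹ : ℝ) : ℂ)) * Uᴴ := hcfcA _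
  have hSH : (sqrtM A)ᴴ = sqrtM A := by rw [hSU]; exact conj_diagonal_isHermitian _ _
  have hTH : (invSqrtM A)ᴴ = invSqrtM A := by rw [hTU]; exact conj_diagonal_isHermitian _ _
  have hSpd : (sqrtM A).PosDef := by
    rw [hSU]; exact conj_diagonal_posDef hU' fun j => Real.sqrt_pos.2 (hApos j)
  have hTS : invSqrtM A = (sqrtM A)⁻¹ := by
    rw [hSU, hTU, conj_diagonal_inv hU hU' fun j => Real.sqrt_pos.2 (hApos j)]
  set S := sqrtM A
  set T := invSqrtM A
  have hSdet : IsUnit S.det := (isUnit_iff_isUnit_det _).1 hSpd.isUnit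
  set V := U.submatrix id f
  have hV : Vᴴ * V = 1 := submatrix_col_isometry hU hf
  have hSV : S * V = V * diagonal (fun i => ((√(hA.1.eigenvalues (f i)) : ℝ) : ℂ)) := by
    rw [hSU]; exact conj_diagonal_mul_submatrix hU f _
  have hprodA' : ∏ i, √(hA.1.eigenvalues (f i)) ^ 2 = prodLarge A k := by
    rw [hprodA]
    exact Finset.prod_congr rfl fun i _ => Real.sq_sqrt (hApos _).le
  -- diagonalization of `A ^ (-1/2) * B * A ^ (-1/2)`
  have hCpd : (T * B * T).PosDef :=
    conj_posDef hTH (by rw [hTS]; exact hSpd.inv.isUnit) hB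
  have hCinv : (T * B * T)⁻¹ = S * B⁻¹ * S := by
    rw [Matrix.mul_inv_rev, Matrix.mul_inv_rev, hTS, nonsing_inv_nonsing_inv _ hSdet, Matrix.mul_assoc]
  obtain ⟨Q, hQ, hQ', hCQ, hcfcC⟩ := hCpd.1.exists_unitary_cfc_eq
  have hlpos := hCpd.eigenvalues_pos
  have hN : opMean h A B = S * cfc h (T * B * T) * S := rfl
  have hcfch := hcfcC h
  set l := hCpd.1.eigenvalues
  set W := Qᴴ * V
  have hW : Wᴴ * W = 1 := unitary_conjTranspose_mul_isometry hQ' hV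
  have hpos : ∀ {x : ℝ}, 0 < x → 0 < h x := pos_of_geometrically_convex hnn h1 hgconvex
  have hNpd : (opMean h A B).PosDef := by
    rw [hN, hcfch]
    exact conj_posDef hSH hSpd.isUnit (conj_diagonal_posDef hQ' fun j => hpos (hlpos j))
  have hPN := prodLarge_pos hNpd k
  set p : Fin n → ℝ := fun j => ∑ i, ‖W j i‖ ^ 2 with hp
  have hp0 : ∀ j, 0 ≤ p j := fun j => Finset.sum_nonneg fun i _ => by positivity
  have hk0 : (0 : ℝ) < k := by exact_mod_cast hk1
  have hpsum : ∑ j, p j = k := by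
    simp only [hp]
    rw [Finset.sum_comm]
    have hcol : ∀ i, ∑ j, ‖W j i‖ ^ 2 = 1 := by
      intro i
      have hii := congrFun (congrFun hW i) i
      simp only [mul_apply, conjTranspose_apply, one_apply_eq, Complex.star_def,
        Complex.conj_mul'] at hii
      exact_mod_cast hii
    simp [hcol]
  -- the two determinant estimates
  have hupper : ∑ j, p j * Real.log (h (l j)) ≤
      Real.log (prodLarge (opMean h A B) k) - Real.log (prodLarge A k) := by
    refine (sum_log_le_log_re_det_compression hW fun j => hpos (hlpos j)).trans ?_
    have hdet := hNpd.re_det_compression_le_prodLarge hk1 hkn hV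
    rw [hN, re_det_compression_congr hSH hSV, ← hN, hprodA', hcfch, compression_conj_eq] at hdet
    have hdpos := (Complex.lt_def.1
      (posDef_compression_diagonal hW fun j => hpos (hlpos j)).det_pos).1
    have hlog := Real.log_le_log (mul_pos hPA hdpos) hdet
    rw [Real.log_mul hPA.ne' hdpos.ne'] at hlog
    linarith
  have hlower : Real.log (prodSmall B k) - Real.log (prodLarge A k) ≤
      ∑ j, p j * Real.log (l j) := by
    have hlog := sum_log_le_log_re_det_compression hW fun j => inv_pos.2 (hlpos j)
    have hdet := hB.re_det_compression_inv_le hk1 hkn hV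
    have hcongr := re_det_compression_congr (Z := B⁻¹) hSH hSV
    rw [← hCinv, hCQ, conj_diagonal_inv hQ hQ' hlpos, compression_conj_eq, hprodA'] at hcongr
    rw [hcongr] at hlog
    have hdpos := (Complex.lt_def.1
      (posDef_compression_diagonal hW fun j => inv_pos.2 (hlpos j)).det_pos).1
    rw [hcongr] at hdpos
    have hle := hlog.trans (Real.log_le_log hdpos (mul_le_mul_of_nonneg_left hdet hPA.le))
    rw [Real.log_mul hPA.ne' (inv_pos.2 hPB).ne', Real.log_inv] at hle
    simp only [Real.log_inv, mul_neg, Finset.sum_neg_distrib] at hle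
    simp only [hp]
    linarith
  -- Jensen's inequality for `u ↦ log (h (exp u))`
  set a := prodLarge A k ^ ((k : ℝ)⁻¹) with ha
  set b := prodSmall B k ^ ((k : ℝ)⁻¹) with hb
  have ha0 : 0 < a := Real.rpow_pos_of_pos hPA _
  have hb0 : 0 < b := Real.rpow_pos_of_pos hPB _
  have hloga : Real.log a = (k : ℝ)⁻¹ * Real.log (prodLarge A k) := Real.log_rpow hPA _
  have hlogb : Real.log b = (k : ℝ)⁻¹ * Real.log (prodSmall B k) := Real.log_rpow hPB _
  set u : ℝ := ∑ j, (k : ℝ)⁻¹ * p j * Real.log (l j) with hu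
  have hmean : b / a ≤ Real.exp u := by
    rw [← Real.log_le_iff_le_exp (div_pos hb0 ha0), Real.log_div hb0.ne' ha0.ne', hloga, hlogb,
      ← mul_sub, hu]
    simp only [mul_assoc, ← Finset.mul_sum]
    exact mul_le_mul_of_nonneg_left hlower (inv_pos.2 hk0).le
  have hjensen := (convexOn_log_comp_exp hnn hcont h1 hgconvex).map_sum_le (t := Finset.univ)
    (w := fun j => (k : ℝ)⁻¹ * p j) (p := fun j => Real.log (l j))
    (fun j _ => mul_nonneg (inv_pos.2 hk0).le (hp0 j))
    (by rw [← Finset.mul_sum, hpsum, inv_mul_cancel₀ hk0.ne']) fun j _ => Set.mem_univ _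
  simp only [smul_eq_mul, Real.exp_log (hlpos _), mul_assoc, ← Finset.mul_sum] at hjensen
  simp only [mul_assoc, ← Finset.mul_sum] at hu
  rw [← hu] at hjensen
  have hba : 0 < b / a := div_pos hb0 ha0
  have hhle : Real.log (h (b / a)) ≤ Real.log (h (Real.exp u)) :=
    Real.log_le_log (hpos hba) (monotone_of_operator_monotone hopmono hba.le hmean)
  have hfin := mul_le_mul_of_nonneg_left hupper (inv_pos.2 hk0).le
  rw [← Real.log_le_log_iff (mul_pos ha0 (hpos hba)) (Real.rpow_pos_of_pos hPN _),
    Real.log_mul ha0.ne' (hpos hba).ne', Real.log_rpow hPN, hloga]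
  linarith
end

section
/- Let h : [0,∞) → [0,∞) be an operator monotone function with h(1) = 1 (i.e. the representing function of an operator mean), with h(x) > 0 for x > 0, that is geometrically concave, i.e. h(√(xy)) ≥ √(h(x)h(y)) for all x,y ≥ 0. For positive definite n×n complex matrices A, B define A σ B := A^{1/2} h(A^{-1/2} B A^{-1/2}) A^{1/2}. Then for every k = 1,…,n, setting a := (∏_{j=n+1-k}^n μ_j(A))^{1/k} and b := (∏_{j=1}^k μ_j(B))^{1/k}, one has (∏_{j=n+1-k}^n μ_j(A σ B))^{1/k} ≤ a·h(b/a). -/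
open scoped ComplexOrder

open Matrix

/-- **Cauchy–Binet formula**, summed over all maps rather than over subsets. -/
theorem factorial_mul_det_mul {R m n : Type*} [CommRing R] [Fintype m] [DecidableEq m]
    [Fintype n] (M : Matrix m n R) (N : Matrix n m R) :
    ((Fintype.card m).factorial : R) * (M * N).det =
      ∑ p : m → n, (M.submatrix id p).det * (N.submatrix p id).det := by
  classical
  have expand : (M * N).det = ∑ p : m → n, (M.submatrix id p).det * ∏ i, N (p i) i := by
    simp only [det_apply', mul_apply, Finset.prod_univ_sum, Finset.mul_sum,
      Fintype.piFinset_univ, Finset.sum_mul]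
    rw [Finset.sum_comm]
    simp [Finset.prod_mul_distrib, mul_assoc]
  have reindexed (τ : Equiv.Perm m) : (M * N).det =
      ∑ p : m → n, (M.submatrix id p).det * (Equiv.Perm.sign τ * ∏ i, N (p (τ i)) i) := by
    rw [expand, ← (Equiv.arrowCongr τ.symm (Equiv.refl n)).sum_comp]
    refine Finset.sum_congr rfl fun p _ => ?_
    have key : M.submatrix id (p ∘ τ) = (M.submatrix id p).submatrix id τ := rfl
    have : (Equiv.arrowCongr τ.symm (Equiv.refl n)) p = p ∘ τ := by ext; simp
    rw [this, key, det_permute']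
    simp only [Function.comp_apply]
    ring
  have total : ((Fintype.card m).factorial : R) * (M * N).det =
      ∑ _τ : Equiv.Perm m, (M * N).det := by
    simp [Fintype.card_perm]
  rw [total, Finset.sum_congr rfl fun τ _ => reindexed τ, Finset.sum_comm]
  simp [det_apply', Finset.mul_sum]

/-- Determinant of a compression of a diagonalized matrix as a weighted sum of squared minors. -/
theorem factorial_mul_det_compression {n m : Type*} [Fintype n] [DecidableEq n] [Fintype m]
    [DecidableEq m] (U : Matrix n n ℂ) (d : n → ℝ) (X : Matrix n m ℂ) :
    ((Fintype.card m).factorial : ℝ) *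
        ((Xᴴ * (U * diagonal (fun i => (d i : ℂ)) * Uᴴ) * X).det).re =
      ∑ p : m → n, (∏ i, d (p i)) * Complex.normSq (((Uᴴ * X).submatrix p id).det) := by
  set Y := Uᴴ * X with hY
  have hcomp : Xᴴ * (U * diagonal (fun i => (d i : ℂ)) * Uᴴ) * X =
      (Yᴴ * diagonal (fun i => (d i : ℂ))) * Y := by
    simp [hY, Matrix.mul_assoc]
  have hminor (p : m → n) : ((Yᴴ * diagonal (fun i => (d i : ℂ))).submatrix id p).det =
      (∏ i, (d (p i) : ℂ)) * star ((Y.submatrix p id).det) := by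
    have : (Yᴴ * diagonal (fun i => (d i : ℂ))).submatrix id p =
        (Y.submatrix p id)ᴴ * diagonal (fun i => (d (p i) : ℂ)) := by
      ext i j
      simp [mul_diagonal]
    rw [this, det_mul, det_conjTranspose, det_diagonal, mul_comm]
  have hcb := congrArg Complex.re
    (factorial_mul_det_mul (Yᴴ * diagonal (fun i => (d i : ℂ))) Y)
  rw [hcomp]
  have hre : ∀ (c : ℕ) (z : ℂ), ((c : ℂ) * z).re = c * z.re := by intro c z; simp
  rw [hre] at hcb
  rw [hcb, Complex.re_sum]
  refine Finset.sum_congr rfl fun p _ => ?_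
  rw [hminor, mul_assoc]
  have : star ((Y.submatrix p id).det) * (Y.submatrix p id).det =
      (Complex.normSq (Y.submatrix p id).det : ℂ) := Complex.conj_mul' _ |>.trans (by
        rw [Complex.normSq_eq_norm_sq]; push_cast; rfl)
  rw [this, ← Complex.ofReal_prod, ← Complex.ofReal_mul, Complex.ofReal_re]

theorem factorial_mul_det_gram {n m : Type*} [Fintype n] [DecidableEq n] [Fintype m]
    [DecidableEq m] {U : Matrix n n ℂ} (hU : U * Uᴴ = 1) (X : Matrix n m ℂ) :
    ((Fintype.card m).factorial : ℝ) * ((Xᴴ * X).det).re =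
      ∑ p : m → n, Complex.normSq (((Uᴴ * X).submatrix p id).det) := by
  have := factorial_mul_det_compression U (fun _ => 1) X
  simpa [hU] using this

theorem det_submatrix_eq_zero_of_not_injective {n m : Type*} [Fintype m] [DecidableEq m]
    (Y : Matrix n m ℂ) {p : m → n} (hp : ¬ Function.Injective p) :
    (Y.submatrix p id).det = 0 := by
  simp only [Function.Injective, not_forall] at hp
  obtain ⟨i, j, hij, hne⟩ := hp
  exact det_zero_of_row_eq hne (by ext; simp [hij])

theorem det_compression_le {n m : Type*} [Fintype n] [DecidableEq n] [Fintype m]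
    [DecidableEq m] {U : Matrix n n ℂ} (hU : U * Uᴴ = 1) {d : n → ℝ} {c : ℝ}
    (hc : ∀ p : m → n, Function.Injective p → ∏ i, d (p i) ≤ c) (X : Matrix n m ℂ) :
    ((Xᴴ * (U * diagonal (fun i => (d i : ℂ)) * Uᴴ) * X).det).re ≤ c * ((Xᴴ * X).det).re := by
  have hpos : (0 : ℝ) < (Fintype.card m).factorial := by positivity
  refine le_of_mul_le_mul_left ?_ hpos
  rw [mul_left_comm, factorial_mul_det_compression, factorial_mul_det_gram hU, Finset.mul_sum]
  refine Finset.sum_le_sum fun p _ => ?_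
  by_cases hp : Function.Injective p
  · exact mul_le_mul_of_nonneg_right (hc p hp) (Complex.normSq_nonneg _)
  · simp [det_submatrix_eq_zero_of_not_injective _ hp]

theorem le_det_compression {n m : Type*} [Fintype n] [DecidableEq n] [Fintype m]
    [DecidableEq m] {U : Matrix n n ℂ} (hU : U * Uᴴ = 1) {d : n → ℝ} {c : ℝ}
    (hc : ∀ p : m → n, Function.Injective p → c ≤ ∏ i, d (p i)) (X : Matrix n m ℂ) :
    c * ((Xᴴ * X).det).re ≤ ((Xᴴ * (U * diagonal (fun i => (d i : ℂ)) * Uᴴ) * X).det).re := by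
  have hpos : (0 : ℝ) < (Fintype.card m).factorial := by positivity
  refine le_of_mul_le_mul_left ?_ hpos
  rw [mul_left_comm, factorial_mul_det_compression, factorial_mul_det_gram hU, Finset.mul_sum]
  refine Finset.sum_le_sum fun p _ => ?_
  by_cases hp : Function.Injective p
  · exact mul_le_mul_of_nonneg_right (hc p hp) (Complex.normSq_nonneg _)
  · simp [det_submatrix_eq_zero_of_not_injective _ hp]

/-- Selecting distinct columns of a unitary matrix gives an isometry. -/
theorem gram_submatrix_unitary {n m : Type*} [Fintype n] [DecidableEq n]
    [DecidableEq m] {U : Matrix n n ℂ} (hU : Uᴴ * U = 1) {p : m → n}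
    (hp : Function.Injective p) :
    (U.submatrix id p)ᴴ * U.submatrix id p = 1 := by
  have : (U.submatrix id p)ᴴ * U.submatrix id p = (Uᴴ * U).submatrix p p := by
    ext; simp [mul_apply]
  rw [this, hU, submatrix_one _ hp]

theorem det_compression_eigenvectors {n m : Type*} [Fintype n] [DecidableEq n] [Fintype m]
    [DecidableEq m] {U : Matrix n n ℂ} (hU : Uᴴ * U = 1) (d : n → ℝ) {p : m → n}
    (hp : Function.Injective p) :
    (((U.submatrix id p)ᴴ * (U * diagonal (fun i => (d i : ℂ)) * Uᴴ) *
      U.submatrix id p).det).re = ∏ i, d (p i) := by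
  have h1 : (U.submatrix id p)ᴴ * (U * diagonal (fun i => (d i : ℂ)) * Uᴴ) * U.submatrix id p =
      ((Uᴴ * U) * diagonal (fun i => (d i : ℂ)) * (Uᴴ * U)).submatrix p p := by
    have e1 : (U.submatrix id p)ᴴ = Uᴴ.submatrix p id := rfl
    rw [e1, submatrix_mul _ _ p id p Function.bijective_id,
      submatrix_mul _ _ p id id Function.bijective_id,
      submatrix_mul Uᴴ U p id id Function.bijective_id,
      submatrix_mul Uᴴ U id id p Function.bijective_id]
    simp [Matrix.mul_assoc]
  rw [h1, hU, one_mul, mul_one, submatrix_diagonal _ _ hp, det_diagonal]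
  simp [← Complex.ofReal_prod]

theorem Fin.val_le_val_of_strictMono {k n : ℕ} {q : Fin k → Fin n} (hq : StrictMono q)
    (i : Fin k) : (i : ℕ) ≤ q i := by
  obtain ⟨i, hi⟩ := i
  induction i with
  | zero => exact Nat.zero_le _
  | succ i ih =>
    exact (ih (by omega)).trans_lt (hq (show (⟨i, by omega⟩ : Fin k) < ⟨i + 1, hi⟩ from
      Nat.lt_succ_self i))

theorem Fin.exists_perm_castLE_le {k n : ℕ} (hkn : k ≤ n) {p : Fin k → Fin n}
    (hp : Function.Injective p) : ∃ τ : Equiv.Perm (Fin k), ∀ i, Fin.castLE hkn i ≤ p (τ i) :=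
  ⟨Tuple.sort p, fun i => Fin.val_le_val_of_strictMono
    ((Tuple.monotone_sort p).strictMono_of_injective (hp.comp (Equiv.injective _))) i⟩

theorem prod_filter_val_lt {k n : ℕ} (hkn : k ≤ n) (e : Fin n → ℝ) :
    ∏ i ∈ Finset.univ.filter (fun i : Fin n => (i : ℕ) < k), e i =
      ∏ i : Fin k, e (Fin.castLE hkn i) := by
  symm
  refine Finset.prod_bij (fun i _ => Fin.castLE hkn i) (fun i _ => by simp)
    (fun i _ j _ hij => by simpa using hij) (fun b hb => ?_) (fun _ _ => rfl)
  exact ⟨⟨b, by simpa using hb⟩, Finset.mem_univ _, rfl⟩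

/-- Indices of the `k` smallest eigenvalues. -/
noncomputable def smallIndex {n k : ℕ} (hkn : k ≤ n) {A : Matrix (Fin n) (Fin n) ℂ}
    (hA : A.IsHermitian) (i : Fin k) : Fin n :=
  Tuple.sort hA.eigenvalues (Fin.castLE hkn i)

theorem smallIndex_injective {n k : ℕ} (hkn : k ≤ n) {A : Matrix (Fin n) (Fin n) ℂ}
    (hA : A.IsHermitian) : Function.Injective (smallIndex hkn hA) :=
  (Equiv.injective _).comp (Fin.castLE_injective hkn)

theorem prodSmall_eq {n k : ℕ} (hkn : k ≤ n) {A : Matrix (Fin n) (Fin n) ℂ}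
    (hA : A.IsHermitian) : prodSmall A k = ∏ i, hA.eigenvalues (smallIndex hkn hA i) := by
  rw [prodSmall, dif_pos hA, prod_filter_val_lt hkn]
  rfl

theorem prodSmall_le {n k : ℕ} (hkn : k ≤ n) {A : Matrix (Fin n) (Fin n) ℂ}
    (hA : A.PosSemidef) {p : Fin k → Fin n} (hp : Function.Injective p) :
    prodSmall A k ≤ ∏ i, hA.isHermitian.eigenvalues (p i) := by
  set σ := Tuple.sort hA.isHermitian.eigenvalues with hσ
  obtain ⟨τ, hτ⟩ := Fin.exists_perm_castLE_le hkn (p := fun i => σ.symm (p i))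
    (σ.symm.injective.comp hp)
  rw [prodSmall_eq hkn hA.isHermitian, ← Equiv.prod_comp τ fun i => hA.isHermitian.eigenvalues (p i)]
  refine Finset.prod_le_prod (fun i _ => hA.eigenvalues_nonneg _) fun i _ => ?_
  simpa [hσ, smallIndex] using Tuple.monotone_sort hA.isHermitian.eigenvalues (hτ i)

theorem le_prodLarge {n k : ℕ} (hkn : k ≤ n) {A : Matrix (Fin n) (Fin n) ℂ}
    (hA : A.PosSemidef) {p : Fin k → Fin n} (hp : Function.Injective p) :
    ∏ i, hA.isHermitian.eigenvalues (p i) ≤ prodLarge A k := by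
  set σ := Tuple.sort hA.isHermitian.eigenvalues with hσ
  obtain ⟨τ, hτ⟩ := Fin.exists_perm_castLE_le hkn (p := fun i => (σ.symm (p i)).rev)
    (Fin.rev_injective.comp (σ.symm.injective.comp hp))
  rw [prodLarge, dif_pos hA.isHermitian, prod_filter_val_lt hkn,
    ← Equiv.prod_comp τ fun i => hA.isHermitian.eigenvalues (p i)]
  refine Finset.prod_le_prod (fun i _ => hA.eigenvalues_nonneg _) fun i _ => ?_
  have := Tuple.monotone_sort hA.isHermitian.eigenvalues (Fin.rev_le_rev.mpr (hτ i))
  simpa [hσ, eigDown, eigUp] using this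

theorem Matrix.IsHermitian.cfc_eq_unitary_conj {n : ℕ} {A : Matrix (Fin n) (Fin n) ℂ}
    (hA : A.IsHermitian) (f : ℝ → ℝ) :
    cfc f A = (hA.eigenvectorUnitary : Matrix (Fin n) (Fin n) ℂ) *
      diagonal (fun i => ((f (hA.eigenvalues i) : ℝ) : ℂ)) *
      (hA.eigenvectorUnitary : Matrix (Fin n) (Fin n) ℂ)ᴴ := by
  rw [hA.cfc_eq, Matrix.IsHermitian.cfc, Unitary.conjStarAlgAut_apply]
  rfl

theorem Matrix.IsHermitian.eq_unitary_conj {n : ℕ} {A : Matrix (Fin n) (Fin n) ℂ}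
    (hA : A.IsHermitian) :
    A = (hA.eigenvectorUnitary : Matrix (Fin n) (Fin n) ℂ) *
      diagonal (fun i => (hA.eigenvalues i : ℂ)) *
      (hA.eigenvectorUnitary : Matrix (Fin n) (Fin n) ℂ)ᴴ := by
  conv_lhs => rw [hA.spectral_theorem, Unitary.conjStarAlgAut_apply]
  rfl

theorem Matrix.IsHermitian.eigenvectorUnitary_mul_conjTranspose {n : ℕ}
    {A : Matrix (Fin n) (Fin n) ℂ} (hA : A.IsHermitian) :
    (hA.eigenvectorUnitary : Matrix (Fin n) (Fin n) ℂ) *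
      (hA.eigenvectorUnitary : Matrix (Fin n) (Fin n) ℂ)ᴴ = 1 :=
  Unitary.coe_mul_star_self _

theorem Matrix.IsHermitian.conjTranspose_mul_eigenvectorUnitary {n : ℕ}
    {A : Matrix (Fin n) (Fin n) ℂ} (hA : A.IsHermitian) :
    (hA.eigenvectorUnitary : Matrix (Fin n) (Fin n) ℂ)ᴴ *
      (hA.eigenvectorUnitary : Matrix (Fin n) (Fin n) ℂ) = 1 :=
  Unitary.coe_star_mul_self _

/-- Jensen's inequality for midpoint concave functions, by forward-backward induction. -/
theorem sum_le_card_mul_of_midpoint_concave {g : ℝ → ℝ}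
    (hg : ∀ s t, (g s + g t) / 2 ≤ g ((s + t) / 2)) {k : ℕ} (hk : 1 ≤ k) (x : Fin k → ℝ) :
    ∑ i, g (x i) ≤ k * g ((∑ i, x i) / k) := by
  have dyadic (m : ℕ) : ∀ y : ℕ → ℝ, ∑ i ∈ Finset.range (2 ^ m), g (y i) ≤
      2 ^ m * g ((∑ i ∈ Finset.range (2 ^ m), y i) / 2 ^ m) := by
    induction m with
    | zero => intro y; simp
    | succ m ih =>
      intro y
      have e : 2 ^ (m + 1) = 2 ^ m + 2 ^ m := by ring
      rw [e, Finset.sum_range_add, Finset.sum_range_add]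
      have h1 := ih y
      have h2 := ih fun i => y (2 ^ m + i)
      set s := ∑ i ∈ Finset.range (2 ^ m), y i
      set t := ∑ i ∈ Finset.range (2 ^ m), y (2 ^ m + i)
      have h3 := hg (s / 2 ^ m) (t / 2 ^ m)
      have h4 : (s / 2 ^ m + t / 2 ^ m) / 2 = (s + t) / 2 ^ (m + 1) := by
        field_simp
        ring
      rw [h4] at h3
      have h5 := mul_le_mul_of_nonneg_left h3 (show (0 : ℝ) ≤ 2 ^ (m + 1) by positivity)
      rw [pow_succ] at h5 ⊢
      linarith
  have hk0 : (k : ℝ) ≠ 0 := by positivity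
  set M := (∑ i, x i) / k with hM
  obtain ⟨r, hr⟩ := Nat.exists_eq_add_of_le (Nat.lt_two_pow_self (n := k)).le
  have hrR : (2 : ℝ) ^ k = k + r := by exact_mod_cast hr
  have hpad (f : ℝ → ℝ) : ∑ i ∈ Finset.range (2 ^ k),
      f (if hi : i < k then x ⟨i, hi⟩ else M) = ∑ i, f (x i) + r * f M := by
    rw [hr, Finset.sum_range_add, Finset.sum_range]
    simp
  have h := dyadic k fun i => if hi : i < k then x ⟨i, hi⟩ else M
  have hid := hpad id
  simp only [id] at hid
  rw [hpad g, hid] at h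
  have hmean : (∑ i, x i + r * M) / 2 ^ k = M := by
    have : ∑ i, x i = k * M := by rw [hM]; field_simp
    rw [this, hrR]
    have : (k : ℝ) + r ≠ 0 := by positivity
    field_simp
  rw [hmean, hrR] at h
  linarith

/-- Multiplicative Jensen inequality for geometrically concave functions. -/
theorem prod_le_pow_of_geometrically_concave {h : ℝ → ℝ} (hposi : ∀ x : ℝ, 0 < x → 0 < h x)
    (hgconcave : ∀ x y : ℝ, 0 ≤ x → 0 ≤ y → Real.sqrt (h x * h y) ≤ h (Real.sqrt (x * y)))
    {k : ℕ} (hk : 1 ≤ k) {x : Fin k → ℝ} (hx : ∀ i, 0 < x i) :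
    ∏ i, h (x i) ≤ h ((∏ i, x i) ^ ((k : ℝ)⁻¹)) ^ k := by
  have mid (s t : ℝ) : (Real.log (h (Real.exp s)) + Real.log (h (Real.exp t))) / 2 ≤
      Real.log (h (Real.exp ((s + t) / 2))) := by
    have hs := hposi _ (Real.exp_pos s)
    have ht := hposi _ (Real.exp_pos t)
    have h1 := hgconcave _ _ (Real.exp_pos s).le (Real.exp_pos t).le
    rw [← Real.exp_add, ← Real.exp_half] at h1
    have h2 := Real.log_le_log (by positivity) h1
    rwa [Real.log_sqrt (by positivity), Real.log_mul hs.ne' ht.ne'] at h2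
  have hj := sum_le_card_mul_of_midpoint_concave
    (g := fun t => Real.log (h (Real.exp t))) mid hk (fun i => Real.log (x i))
  have hP : 0 < ∏ i, x i := Finset.prod_pos fun i _ => hx i
  have hroot : Real.exp ((∑ i, Real.log (x i)) / k) = (∏ i, x i) ^ ((k : ℝ)⁻¹) := by
    rw [← Real.log_prod (fun i _ => (hx i).ne'), Real.rpow_def_of_pos hP, div_eq_mul_inv]
  simp only [hroot, Real.exp_log (hx _)] at hj
  rw [← Real.log_prod (fun i _ => (hposi _ (hx i)).ne'), ← Real.log_pow] at hj
  exact (Real.log_le_log_iff (Finset.prod_pos fun i _ => hposi _ (hx i))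
    (pow_pos (hposi _ (by positivity)) _)).mp hj

theorem monotoneOn_of_matrix_monotone {h : ℝ → ℝ}
    (hopmono : ∀ (m : ℕ) (X Y : Matrix (Fin m) (Fin m) ℂ), X.PosSemidef →
      (Y - X).PosSemidef → (cfc h Y - cfc h X).PosSemidef) : MonotoneOn h (Set.Ici 0) := by
  intro x hx y _ hxy
  have hscalar (t : ℝ) (ht : 0 ≤ t) :
      (algebraMap ℝ (Matrix (Fin 1) (Fin 1) ℂ) t).PosSemidef := by
    rw [Matrix.algebraMap_eq_diagonal]
    exact PosSemidef.diagonal fun i => by simpa using ht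
  have key := hopmono 1 (algebraMap ℝ _ x) (algebraMap ℝ _ y) (hscalar x hx)
    (by rw [← map_sub]; exact hscalar _ (sub_nonneg.mpr hxy))
  rw [cfc_algebraMap, cfc_algebraMap, ← map_sub] at key
  have := key.diag_nonneg (i := 0)
  simpa [Matrix.algebraMap_eq_diagonal, ← Complex.ofReal_sub] using this

theorem Matrix.PosDef.sqrtM_mul_self {n : ℕ} {A : Matrix (Fin n) (Fin n) ℂ} (hA : A.PosDef) :
    sqrtM A * sqrtM A = A := by
  have hs : IsSelfAdjoint A := hA.isHermitian
  rw [sqrtM, ← cfc_mul ..]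
  conv_rhs => rw [← cfc_id' ℝ A]
  refine cfc_congr fun x hx => ?_
  rw [hA.isHermitian.spectrum_real_eq_range_eigenvalues] at hx
  obtain ⟨i, rfl⟩ := hx
  exact Real.mul_self_sqrt (hA.posSemidef.eigenvalues_nonneg i)

theorem Matrix.PosDef.sqrtM_mul_invSqrtM {n : ℕ} {A : Matrix (Fin n) (Fin n) ℂ}
    (hA : A.PosDef) : sqrtM A * invSqrtM A = 1 := by
  have hs : IsSelfAdjoint A := hA.isHermitian
  have hfin : (spectrum ℝ A).Finite := Matrix.finite_real_spectrum
  rw [sqrtM, invSqrtM, ← cfc_mul _ _ _ (hfin.continuousOn _) (hfin.continuousOn _),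
    ← cfc_const_one ℝ A]
  refine cfc_congr fun x hx => ?_
  rw [hA.isHermitian.spectrum_real_eq_range_eigenvalues] at hx
  obtain ⟨i, rfl⟩ := hx
  exact mul_inv_cancel₀ (Real.sqrt_pos.mpr (hA.eigenvalues_pos i)).ne'

theorem isHermitian_sqrtM {n : ℕ} (A : Matrix (Fin n) (Fin n) ℂ) : (sqrtM A).IsHermitian :=
  cfc_predicate (p := IsSelfAdjoint) _ A

theorem isHermitian_invSqrtM {n : ℕ} (A : Matrix (Fin n) (Fin n) ℂ) :
    (invSqrtM A).IsHermitian :=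
  cfc_predicate (p := IsSelfAdjoint) _ A

theorem prod_eigenvalues_congruence_le {n k : ℕ} {A B : Matrix (Fin n) (Fin n) ℂ}
    (hA : A.PosDef) (hB : B.PosDef) (hkn : k ≤ n)
    (hC : (invSqrtM A * B * invSqrtM A).IsHermitian) {p : Fin k → Fin n}
    (hp : Function.Injective p) :
    prodSmall A k * ∏ i, hC.eigenvalues (p i) ≤ prodLarge B k := by
  set I := invSqrtM A with hI
  have hIH : Iᴴ = I := isHermitian_invSqrtM A
  have hRI : sqrtM A * I = 1 := hA.sqrtM_mul_invSqrtM
  have hIR : I * sqrtM A = 1 := mul_eq_one_comm.mp hRI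
  have hIAI : I * A * I = 1 := by
    rw [← hA.sqrtM_mul_self, ← Matrix.mul_assoc, hIR, Matrix.one_mul, hRI]
  set W := (hC.eigenvectorUnitary : Matrix (Fin n) (Fin n) ℂ).submatrix id p with hW
  have hWW : Wᴴ * W = 1 := gram_submatrix_unitary hC.conjTranspose_mul_eigenvectorUnitary hp
  have hWC : ((Wᴴ * (I * B * I) * W).det).re = ∏ i, hC.eigenvalues (p i) := by
    have := det_compression_eigenvectors hC.conjTranspose_mul_eigenvectorUnitary
      hC.eigenvalues hp
    rwa [← hC.eq_unitary_conj] at this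
  have upper := det_compression_le hB.isHermitian.eigenvectorUnitary_mul_conjTranspose
    (fun q hq => le_prodLarge hkn hB.posSemidef (p := q) hq) (I * W)
  have lower := le_det_compression hA.isHermitian.eigenvectorUnitary_mul_conjTranspose
    (fun q hq => prodSmall_le hkn hA.posSemidef (p := q) hq) (I * W)
  rw [← hB.isHermitian.eq_unitary_conj] at upper
  rw [← hA.isHermitian.eq_unitary_conj] at lower
  have eB : (I * W)ᴴ * B * (I * W) = Wᴴ * (I * B * I) * W := by
    simp [conjTranspose_mul, hIH, Matrix.mul_assoc]
  have eA : (I * W)ᴴ * A * (I * W) = 1 := by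
    have : (I * W)ᴴ * A * (I * W) = Wᴴ * (I * A * I) * W := by
      simp [conjTranspose_mul, hIH, Matrix.mul_assoc]
    rw [this, hIAI, Matrix.mul_one, hWW]
  rw [eB, hWC] at upper
  rw [eA, det_one, Complex.one_re] at lower
  have hs : 0 ≤ prodSmall A k := by
    rw [prodSmall_eq hkn hA.isHermitian]
    exact Finset.prod_nonneg fun i _ => hA.posSemidef.eigenvalues_nonneg _
  have hl : 0 ≤ prodLarge B k :=
    (Finset.prod_nonneg fun i _ => hB.posSemidef.eigenvalues_nonneg _).trans
      (le_prodLarge hkn hB.posSemidef (Fin.castLE_injective hkn))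
  calc _ ≤ prodSmall A k * (prodLarge B k * (((I * W)ᴴ * (I * W)).det).re) :=
        mul_le_mul_of_nonneg_left upper hs
    _ = prodLarge B k * (prodSmall A k * (((I * W)ᴴ * (I * W)).det).re) := by ring
    _ ≤ prodLarge B k * 1 := mul_le_mul_of_nonneg_left lower hl
    _ = _ := mul_one _

theorem prodSmall_congruence_le {n k : ℕ} {A C : Matrix (Fin n) (Fin n) ℂ} (hA : A.PosDef)
    (hC : C.IsHermitian) (hkn : k ≤ n) {h : ℝ → ℝ} {c : ℝ}
    (hc : ∀ p : Fin k → Fin n, Function.Injective p → ∏ i, h (hC.eigenvalues (p i)) ≤ c)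
    (hS : (sqrtM A * cfc h C * sqrtM A).PosSemidef) :
    prodSmall (sqrtM A * cfc h C * sqrtM A) k ≤ c * prodSmall A k := by
  set R := sqrtM A with hR
  have hRH : Rᴴ = R := isHermitian_sqrtM A
  have hp := smallIndex_injective hkn hA.isHermitian
  set V := (hA.isHermitian.eigenvectorUnitary : Matrix (Fin n) (Fin n) ℂ).submatrix id
    (smallIndex hkn hA.isHermitian) with hV
  have hVV : Vᴴ * V = 1 :=
    gram_submatrix_unitary hA.isHermitian.conjTranspose_mul_eigenvectorUnitary hp
  have hVA : ((Vᴴ * A * V).det).re = prodSmall A k := by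
    have := det_compression_eigenvectors
      hA.isHermitian.conjTranspose_mul_eigenvectorUnitary hA.isHermitian.eigenvalues hp
    rw [← hA.isHermitian.eq_unitary_conj] at this
    rw [this, prodSmall_eq hkn hA.isHermitian]
  have lower := le_det_compression hS.isHermitian.eigenvectorUnitary_mul_conjTranspose
    (fun q hq => prodSmall_le hkn hS (p := q) hq) V
  rw [← hS.isHermitian.eq_unitary_conj, hVV, det_one, Complex.one_re, mul_one] at lower
  have upper := det_compression_le hC.eigenvectorUnitary_mul_conjTranspose
    (d := fun i => h (hC.eigenvalues i)) hc (R * V)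
  rw [← hC.cfc_eq_unitary_conj h] at upper
  have e1 : (R * V)ᴴ * cfc h C * (R * V) = Vᴴ * (R * cfc h C * R) * V := by
    simp [conjTranspose_mul, hRH, Matrix.mul_assoc]
  have e2 : (R * V)ᴴ * (R * V) = Vᴴ * A * V := by
    have : (R * V)ᴴ * (R * V) = Vᴴ * (R * R) * V := by
      simp [conjTranspose_mul, hRH, Matrix.mul_assoc]
    rw [this, hA.sqrtM_mul_self]
  rw [e1, e2, hVA] at upper
  exact lower.trans upper

theorem stmt_7 {n : ℕ} (h : ℝ → ℝ) (hnn : ∀ x : ℝ, 0 ≤ x → 0 ≤ h x)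
    (hcont : ContinuousOn h (Set.Ici 0)) (h1 : h 1 = 1)
    (hposi : ∀ x : ℝ, 0 < x → 0 < h x)
    (hopmono : ∀ (m : ℕ) (X Y : Matrix (Fin m) (Fin m) ℂ), X.PosSemidef →
      (Y - X).PosSemidef → (cfc h Y - cfc h X).PosSemidef)
    (hgconcave : ∀ x y : ℝ, 0 ≤ x → 0 ≤ y → Real.sqrt (h x * h y) ≤ h (Real.sqrt (x * y)))
    (A B : Matrix (Fin n) (Fin n) ℂ) (hA : A.PosDef) (hB : B.PosDef)
    (k : ℕ) (hk1 : 1 ≤ k) (hkn : k ≤ n) :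
    prodSmall (opMean h A B) k ^ ((k : ℝ)⁻¹)
      ≤ (prodSmall A k ^ ((k : ℝ)⁻¹)) *
          h ((prodLarge B k ^ ((k : ℝ)⁻¹)) / (prodSmall A k ^ ((k : ℝ)⁻¹))) := by
  have hk0 : k ≠ 0 := by omega
  have hIH : (invSqrtM A)ᴴ = invSqrtM A := isHermitian_invSqrtM A
  have hRH : (sqrtM A)ᴴ = sqrtM A := isHermitian_sqrtM A
  have hCpos : (invSqrtM A * B * invSqrtM A).PosDef := by
    have hinj : Function.Injective (invSqrtM A).mulVec :=
      Matrix.mulVec_injective_of_isUnit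
        (IsUnit.of_mul_eq_one _ (mul_eq_one_comm.mp hA.sqrtM_mul_invSqrtM))
    simpa [hIH] using hB.conjTranspose_mul_mul_same hinj
  have hC := hCpos.isHermitian
  have hS : (opMean h A B).PosSemidef := by
    have hH : (cfc h (invSqrtM A * B * invSqrtM A)).PosSemidef := by
      rw [hC.cfc_eq_unitary_conj]
      refine PosSemidef.mul_mul_conjTranspose_same (PosSemidef.diagonal fun i => ?_) _
      simpa using hnn _ (hCpos.eigenvalues_pos i).le
    simpa [opMean, hRH] using hH.conjTranspose_mul_mul_same (sqrtM A)
  have hs : 0 < prodSmall A k := by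
    rw [prodSmall_eq hkn hA.isHermitian]
    exact Finset.prod_pos fun i _ => hA.eigenvalues_pos _
  have hl : 0 < prodLarge B k :=
    (Finset.prod_pos fun i _ => hB.eigenvalues_pos _).trans_le
      (le_prodLarge hkn hB.posSemidef (Fin.castLE_injective hkn))
  have hSnn : 0 ≤ prodSmall (opMean h A B) k := by
    rw [prodSmall_eq hkn hS.isHermitian]
    exact Finset.prod_nonneg fun i _ => hS.eigenvalues_nonneg _
  rw [← Real.div_rpow hl.le hs.le]
  set t := (prodLarge B k / prodSmall A k) ^ ((k : ℝ)⁻¹) with ht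
  have htpos : 0 < t := by positivity
  have hbound : ∀ p : Fin k → Fin n, Function.Injective p →
      ∏ i, h (hC.eigenvalues (p i)) ≤ h t ^ k := by
    intro p hp
    have hP : 0 < ∏ i, hC.eigenvalues (p i) :=
      Finset.prod_pos fun i _ => hCpos.eigenvalues_pos _
    refine (prod_le_pow_of_geometrically_concave hposi hgconcave hk1
      fun i => hCpos.eigenvalues_pos _).trans ?_
    refine pow_le_pow_left₀ (hposi _ (by positivity)).le ?_ k
    refine monotoneOn_of_matrix_monotone hopmono (Set.mem_Ici.mpr (by positivity))
      (Set.mem_Ici.mpr htpos.le) ?_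
    refine Real.rpow_le_rpow hP.le ?_ (by positivity)
    rw [le_div_iff₀ hs, mul_comm]
    exact prod_eigenvalues_congruence_le hA hB hkn hC hp
  have key : prodSmall (opMean h A B) k ≤ h t ^ k * prodSmall A k :=
    prodSmall_congruence_le hA hC hkn hbound hS
  calc prodSmall (opMean h A B) k ^ ((k : ℝ)⁻¹)
      ≤ (h t ^ k * prodSmall A k) ^ ((k : ℝ)⁻¹) :=
        Real.rpow_le_rpow hSnn key (by positivity)
    _ = prodSmall A k ^ ((k : ℝ)⁻¹) * h t := by
        rw [Real.mul_rpow (pow_nonneg (hposi t htpos).le k) hs.le,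
          Real.pow_rpow_inv_natCast (hposi t htpos).le hk0, mul_comm]
end

section
/- Let h : [0,∞) → [0,∞) be an operator monotone function with h(1) = 1, and for positive definite n×n complex matrices A, B define A σ B := A^{1/2} h(A^{-1/2} B A^{-1/2}) A^{1/2}. If h is geometrically convex (h(√(xy)) ≤ √(h(x)h(y)) for all x,y ≥ 0), then det^{1/n}(A σ B) ≥ (det^{1/n} A)·h(det^{1/n} B / det^{1/n} A); if h is geometrically concave (h(√(xy)) ≥ √(h(x)h(y))) and h(x) > 0 for x > 0, then the reverse inequality det^{1/n}(A σ B) ≤ (det^{1/n} A)·h(det^{1/n} B / det^{1/n} A) holds. -/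
open scoped ComplexOrder

/-- A continuous midpoint convex function on the line is convex. -/
theorem convexOn_univ_of_midpoint {g : ℝ → ℝ} (hg : Continuous g)
    (hmid : ∀ x y, g ((x + y) / 2) ≤ (g x + g y) / 2) : ConvexOn ℝ Set.univ g := by
  refine ⟨convex_univ, fun x _ y _ a b ha hb hab => ?_⟩
  set φ : ℝ → ℝ := fun t => g ((1 - t) * x + t * y) - ((1 - t) * g x + t * g y) with hφ
  have hφc : Continuous φ := by fun_prop
  have hφ0 : φ 0 = 0 := by simp [hφ]
  have hφ1 : φ 1 = 0 := by simp [hφ]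
  have hφmid : ∀ s t, φ ((s + t) / 2) ≤ (φ s + φ t) / 2 := by
    intro s t
    have hst := hmid ((1 - s) * x + s * y) ((1 - t) * x + t * y)
    have harg : ((1 - s) * x + s * y + ((1 - t) * x + t * y)) / 2
        = (1 - (s + t) / 2) * x + (s + t) / 2 * y := by ring
    rw [harg] at hst
    simp only [hφ]
    linarith
  obtain ⟨t, ht, hmax⟩ := isCompact_Icc.exists_isMaxOn
    (Set.nonempty_Icc.2 (zero_le_one' ℝ)) hφc.continuousOn
  -- Reflect the endpoint nearer to the maximiser through the maximiser.
  have hφt : φ t ≤ 0 := by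
    rcases le_total t (1 / 2) with hle | hle
    · have hend : φ (2 * t) ≤ φ t := hmax ⟨by linarith [ht.1], by linarith⟩
      have hhalf := hφmid 0 (2 * t)
      rw [show (0 + 2 * t) / 2 = t by ring] at hhalf
      linarith
    · have hend : φ (2 * t - 1) ≤ φ t := hmax ⟨by linarith, by linarith [ht.2]⟩
      have hhalf := hφmid 1 (2 * t - 1)
      rw [show (1 + (2 * t - 1)) / 2 = t by ring] at hhalf
      linarith
  have hb' : φ b ≤ φ t := hmax ⟨hb, by linarith⟩
  obtain rfl : a = 1 - b := by linarith
  simp only [hφ] at hb' hφt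
  simp only [smul_eq_mul]
  linarith

/-- Jensen's inequality for geometrically convex functions. -/
theorem geom_mean_le_of_geomConvex {ι : Type*} [Fintype ι] [Nonempty ι] {k : ℝ → ℝ}
    (hk : ContinuousOn k (Set.Ioi 0)) (hpos : ∀ x, 0 < x → 0 < k x)
    (hgeom : ∀ x y, 0 < x → 0 < y → k (Real.sqrt (x * y)) ≤ Real.sqrt (k x * k y))
    {l : ι → ℝ} (hl : ∀ i, 0 < l i) :
    k ((∏ i, l i) ^ ((Fintype.card ι : ℝ)⁻¹)) ≤ (∏ i, k (l i)) ^ ((Fintype.card ι : ℝ)⁻¹) := by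
  have hexp : Continuous fun t => k (Real.exp t) :=
    hk.comp_continuous Real.continuous_exp fun t => Real.exp_pos t
  have hconv : ConvexOn ℝ Set.univ fun t => Real.log (k (Real.exp t)) := by
    refine convexOn_univ_of_midpoint
      (hexp.log fun t => (hpos _ (Real.exp_pos t)).ne') fun x y => ?_
    have hxy := hgeom _ _ (Real.exp_pos x) (Real.exp_pos y)
    rw [← Real.exp_add, ← Real.exp_half] at hxy
    have hlog := Real.log_le_log (hpos _ (Real.exp_pos _)) hxy
    have hx := hpos _ (Real.exp_pos x)
    have hy := hpos _ (Real.exp_pos y)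
    rwa [Real.log_sqrt (mul_pos hx hy).le, Real.log_mul hx.ne' hy.ne'] at hlog
  have hcard : (Fintype.card ι : ℝ) ≠ 0 := by exact_mod_cast Fintype.card_ne_zero
  have hjensen := hconv.map_sum_le (t := Finset.univ)
    (w := fun _ : ι => (Fintype.card ι : ℝ)⁻¹) (p := fun i => Real.log (l i))
    (fun _ _ => by positivity) (by simp [hcard]) (fun _ _ => Set.mem_univ _)
  simp only [smul_eq_mul, ← Finset.mul_sum, Real.exp_log (hl _)] at hjensen
  rw [← Real.log_prod (fun i _ => (hl i).ne'), ← Real.log_prod (fun i _ => (hpos _ (hl i)).ne'),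
    Real.log_le_iff_le_exp (hpos _ (Real.exp_pos _)), mul_comm, mul_comm _ (Real.log _),
    ← Real.rpow_def_of_pos (Finset.prod_pos fun i _ => hl i),
    ← Real.rpow_def_of_pos (Finset.prod_pos fun i _ => hpos _ (hl i))] at hjensen
  exact hjensen

theorem Matrix.IsHermitian.det_cfc_eq_prod {n : ℕ} {A : Matrix (Fin n) (Fin n) ℂ}
    (hA : A.IsHermitian) (f : ℝ → ℝ) :
    (cfc f A).det = ((∏ i, f (hA.eigenvalues i) : ℝ) : ℂ) := by
  rw [hA.cfc_eq, Matrix.IsHermitian.cfc]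
  simp [-Unitary.conjStarAlgAut_apply]

theorem rdet_eq_prod_eigenvalues {n : ℕ} {A : Matrix (Fin n) (Fin n) ℂ} (hA : A.IsHermitian) :
    rdet A = ∏ i, hA.eigenvalues i := by
  rw [rdet, hA.det_eq_prod_eigenvalues, ← RCLike.ofReal_prod]
  exact Complex.ofReal_re _

/-- The determinant of an operator mean, in terms of the eigenvalues of `A^{-1/2} B A^{-1/2}`. -/
theorem exists_rdet_opMean {n : ℕ} (h : ℝ → ℝ) {A B : Matrix (Fin n) (Fin n) ℂ}
    (hA : A.PosDef) (hB : B.PosDef) :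
    ∃ l : Fin n → ℝ, (∀ i, 0 < l i) ∧ ∏ i, l i = rdet B / rdet A ∧
      rdet (opMean h A B) = rdet A * ∏ i, h (l i) := by
  have hpos := hA.eigenvalues_pos
  have hherm : (invSqrtM A).IsHermitian := cfc_predicate (fun x : ℝ => (Real.sqrt x)⁻¹) A
  have hinvdet : (invSqrtM A).det = ((∏ i, (Real.sqrt (hA.1.eigenvalues i))⁻¹ : ℝ) : ℂ) :=
    hA.1.det_cfc_eq_prod _
  have hsqrtdet : (sqrtM A).det = ((∏ i, Real.sqrt (hA.1.eigenvalues i) : ℝ) : ℂ) :=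
    hA.1.det_cfc_eq_prod _
  have hsq : (∏ i, Real.sqrt (hA.1.eigenvalues i)) * ∏ i, Real.sqrt (hA.1.eigenvalues i)
      = rdet A := by
    rw [rdet_eq_prod_eigenvalues hA.1, ← Finset.prod_mul_distrib]
    exact Finset.prod_congr rfl fun i _ => Real.mul_self_sqrt (hpos i).le
  have hunit : IsUnit (invSqrtM A) := by
    rw [Matrix.isUnit_iff_isUnit_det, isUnit_iff_ne_zero, hinvdet, Complex.ofReal_ne_zero]
    exact (Finset.prod_pos fun i _ => inv_pos.2 (Real.sqrt_pos.2 (hpos i))).ne'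
  have hC : (invSqrtM A * B * invSqrtM A).PosDef := by
    have hconj := hB.conjTranspose_mul_mul_same (Matrix.mulVec_injective_of_isUnit hunit)
    rwa [hherm.eq] at hconj
  refine ⟨hC.1.eigenvalues, hC.eigenvalues_pos, ?_, ?_⟩
  · rw [← rdet_eq_prod_eigenvalues, rdet, Matrix.det_mul, Matrix.det_mul, hinvdet, mul_right_comm,
      ← Complex.ofReal_mul, Complex.re_ofReal_mul, Finset.prod_inv_distrib, ← mul_inv, hsq,
      div_eq_inv_mul, rdet, rdet]
  · rw [rdet, opMean, Matrix.det_mul, Matrix.det_mul, hsqrtdet, hC.1.det_cfc_eq_prod,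
      mul_right_comm, ← Complex.ofReal_mul, ← Complex.ofReal_mul, Complex.ofReal_re, hsq]

theorem stmt_8 {n : ℕ} (hn : 0 < n) (h : ℝ → ℝ) (hnn : ∀ x : ℝ, 0 ≤ x → 0 ≤ h x)
    (hcont : ContinuousOn h (Set.Ici 0)) (h1 : h 1 = 1)
    (hopmono : ∀ (m : ℕ) (X Y : Matrix (Fin m) (Fin m) ℂ), X.PosSemidef →
      (Y - X).PosSemidef → (cfc h Y - cfc h X).PosSemidef)
    (A B : Matrix (Fin n) (Fin n) ℂ) (hA : A.PosDef) (hB : B.PosDef) :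
    ((∀ x y : ℝ, 0 ≤ x → 0 ≤ y → h (Real.sqrt (x * y)) ≤ Real.sqrt (h x * h y)) →
      (rdet A ^ ((n : ℝ)⁻¹)) * h ((rdet B ^ ((n : ℝ)⁻¹)) / (rdet A ^ ((n : ℝ)⁻¹)))
        ≤ rdet (opMean h A B) ^ ((n : ℝ)⁻¹)) ∧
    ((∀ x y : ℝ, 0 ≤ x → 0 ≤ y → Real.sqrt (h x * h y) ≤ h (Real.sqrt (x * y))) →
      (∀ x : ℝ, 0 < x → 0 < h x) →
      rdet (opMean h A B) ^ ((n : ℝ)⁻¹)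
        ≤ (rdet A ^ ((n : ℝ)⁻¹)) * h ((rdet B ^ ((n : ℝ)⁻¹)) / (rdet A ^ ((n : ℝ)⁻¹)))) := by
  have : NeZero n := ⟨hn.ne'⟩
  obtain ⟨l, hl, hprod, hdet⟩ := exists_rdet_opMean h hA hB
  have hApos : 0 < rdet A := by
    rw [rdet_eq_prod_eigenvalues hA.1]
    exact Finset.prod_pos fun i _ => hA.eigenvalues_pos i
  have hBpos : 0 < rdet B := by
    rw [rdet_eq_prod_eigenvalues hB.1]
    exact Finset.prod_pos fun i _ => hB.eigenvalues_pos i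
  have hcont' : ContinuousOn h (Set.Ioi 0) := hcont.mono Set.Ioi_subset_Ici_self
  rw [hdet, ← Real.div_rpow hBpos.le hApos.le, ← hprod,
    Real.mul_rpow hApos.le (Finset.prod_nonneg fun i _ => hnn _ (hl i).le)]
  refine ⟨fun hconv => ?_, fun hconc hpos => ?_⟩ <;>
    refine mul_le_mul_of_nonneg_left ?_ (by positivity)
  · have hpos : ∀ x, 0 < x → 0 < h x := by
      intro x hx
      refine (hnn x hx.le).lt_of_ne' fun hx0 => ?_
      have hone := hconv x x⁻¹ hx.le (inv_pos.2 hx).le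
      rw [mul_inv_cancel₀ hx.ne', hx0, zero_mul, Real.sqrt_one, Real.sqrt_zero, h1] at hone
      exact absurd hone (by norm_num)
    simpa using geom_mean_le_of_geomConvex hcont' hpos
      (fun x y hx hy => hconv x y hx.le hy.le) hl
  · have hinv := geom_mean_le_of_geomConvex (k := fun x => (h x)⁻¹)
      (hcont'.inv₀ fun x hx => (hpos x hx).ne') (fun x hx => inv_pos.2 (hpos x hx))
      (fun x y hx hy => by
        rw [← mul_inv, Real.sqrt_inv]
        exact inv_anti₀ (Real.sqrt_pos.2 (mul_pos (hpos x hx) (hpos y hy)))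
          (hconc x y hx.le hy.le)) hl
    have hprodl : 0 < ∏ i, l i := Finset.prod_pos fun i _ => hl i
    have hprodh : 0 < ∏ i, h (l i) := Finset.prod_pos fun i _ => hpos _ (hl i)
    rw [Finset.prod_inv_distrib, Real.inv_rpow hprodh.le, Fintype.card_fin] at hinv
    exact (inv_le_inv₀ (hpos _ (by positivity)) (by positivity)).1 hinv
end
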